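/- arXiv:0707.4083 — 2 statements merged into one kernel-verified Lean document; each statement's English description precedes it below -/
import Mathlib

section
/- Let l ≥ 1, F = GF(2^{2l}), t = 2^l, and L₄ = {α ∈ F : α^t + α^{t−1} + 1 ≠ 0}. If S ⊆ L₄ \ {0} is a codeword of the binary Goppa code Γ(L₄ \ {0}, X^t + X^{t−1} + 1), then ∑_{α ∈ S} (α·(α^t + α^{t−1} + 1))⁻¹ = 0 in F. (Paper's Lemma 5: the extra parity-check row [1/(α(α^t+α^{t−1}+1))]_α is a linear combination of the rows of the parity-check matrix H₄*.) -/
open Finset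

/-!
Write `σ α = α ^ t` and `D α = α * (α ^ t + α ^ (t - 1) + 1) = α * σ α + σ α + α`. Since `σ` is an
involution of `F`, it fixes `D α`. The parity checks say that `∑ α ^ k / D α = 0` for `1 ≤ k ≤ t`;
squaring, `∑ α ^ (2 * k) / D α ^ 2 = 0` for the same `k`. Putting `∑ α / D α = 0` over the
denominator `D α ^ 2` gives `∑ α * σ α / D α ^ 2 = 0`, because the other two terms of `α * D α` have
the even degrees `t + 2` and `2`. Similarly `∑ 1 / D α` becomes `∑ (α * σ α + σ α + α) / D α ^ 2`,
whose first two parts vanish, while the third is mapped to the second by `σ`.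
-/

section Denominator

variable {R : Type*} [CommSemiring R]

/-- The value `α * G(α)` for `G = X ^ t + X ^ (t - 1) + 1`, with the `t`-power map replaced by an
arbitrary ring endomorphism `σ`, so that the symmetry under `σ` is visible. It is the denominator
of the extra parity check. -/
def goppaDenom (σ : R →+* R) (α : R) : R :=
  α * σ α + σ α + α

theorem map_goppaDenom {σ : R →+* R} {α : R} (hα : σ (σ α) = α) :
    σ (goppaDenom σ α) = goppaDenom σ α := by
  simp only [goppaDenom, map_add, map_mul, hα]
  ring

theorem goppaDenom_iterateFrobenius (p n : ℕ) [ExpChar R p] (α : R) :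
    goppaDenom (iterateFrobenius R p n) α = α * (α ^ p ^ n + α ^ (p ^ n - 1) + 1) := by
  have hpn : p ^ n ≠ 0 := pow_ne_zero n (expChar_ne_zero R p)
  rw [goppaDenom, iterateFrobenius_def, mul_add, mul_add, mul_pow_sub_one hpn, mul_one]

end Denominator

section ParityChecks

variable {K : Type*} [Field K] {S : Finset K}

theorem sum_div_eq_sum_mul_div_sq {f D : K → K} (hD : ∀ α ∈ S, D α ≠ 0) :
    ∑ α ∈ S, f α / D α = ∑ α ∈ S, f α * D α / D α ^ 2 :=
  sum_congr rfl fun α hα => by rw [sq, mul_div_mul_right _ _ (hD α hα)]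

theorem sum_sq_div_sq_eq_zero [CharP K 2] {f D : K → K} (h : ∑ α ∈ S, f α / D α = 0) :
    ∑ α ∈ S, f α ^ 2 / D α ^ 2 = 0 := by
  simp only [← div_pow]
  rw [← CharTwo.sum_sq, h, zero_pow two_ne_zero]

theorem sum_pow_mul_inv_eq_sum_pow_succ_div {G : K → K} (hS : ∀ α ∈ S, α ≠ 0) (j : ℕ) :
    ∑ α ∈ S, α ^ j * (G α)⁻¹ = ∑ α ∈ S, α ^ (j + 1) / (α * G α) :=
  sum_congr rfl fun α hα => by
    rw [pow_succ', mul_div_mul_left _ _ (hS α hα), div_eq_mul_inv]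

section Involution

variable {σ : K →+* K}

theorem map_sum_div_goppaDenom_sq (hσ : ∀ α ∈ S, σ (σ α) = α) :
    σ (∑ α ∈ S, α / goppaDenom σ α ^ 2) = ∑ α ∈ S, σ α / goppaDenom σ α ^ 2 := by
  rw [map_sum]
  exact sum_congr rfl fun α hα => by rw [map_div₀, map_pow, map_goppaDenom (hσ α hα)]

theorem sum_mul_map_div_goppaDenom_sq_eq_zero
    (hD : ∀ α ∈ S, goppaDenom σ α ≠ 0)
    (h₁ : ∑ α ∈ S, α / goppaDenom σ α = 0)
    (h₂ : ∑ α ∈ S, α ^ 2 / goppaDenom σ α ^ 2 = 0)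
    (h₃ : ∑ α ∈ S, α ^ 2 * σ α / goppaDenom σ α ^ 2 = 0) :
    ∑ α ∈ S, α * σ α / goppaDenom σ α ^ 2 = 0 := by
  have expand (α : K) : α * goppaDenom σ α = α ^ 2 * σ α + α * σ α + α ^ 2 := by
    rw [goppaDenom]; ring
  rw [sum_div_eq_sum_mul_div_sq hD] at h₁
  simpa only [expand, add_div, sum_add_distrib, h₂, h₃, zero_add, add_zero] using h₁

theorem sum_inv_goppaDenom_eq_zero (hσ : ∀ α ∈ S, σ (σ α) = α)
    (hD : ∀ α ∈ S, goppaDenom σ α ≠ 0)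
    (h₁ : ∑ α ∈ S, α * σ α / goppaDenom σ α ^ 2 = 0)
    (h₂ : ∑ α ∈ S, σ α / goppaDenom σ α ^ 2 = 0) :
    ∑ α ∈ S, (goppaDenom σ α)⁻¹ = 0 := by
  have h₃ : ∑ α ∈ S, α / goppaDenom σ α ^ 2 = 0 :=
    σ.injective (by rw [map_sum_div_goppaDenom_sq hσ, h₂, map_zero])
  calc ∑ α ∈ S, (goppaDenom σ α)⁻¹
      = ∑ α ∈ S, goppaDenom σ α / goppaDenom σ α ^ 2 := by
        simpa only [one_div, one_mul] using sum_div_eq_sum_mul_div_sq (f := fun _ => 1) hD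
    _ = ∑ α ∈ S, (α * σ α + σ α + α) / goppaDenom σ α ^ 2 := rfl
    _ = 0 := by simp only [add_div, sum_add_distrib, h₁, h₂, h₃, add_zero]

theorem sum_inv_goppaDenom_eq_zero_of_sqrt [CharP K 2] {τ : K → K} (hτ : ∀ α, τ α ^ 2 = σ α)
    (hσ : ∀ α ∈ S, σ (σ α) = α) (hD : ∀ α ∈ S, goppaDenom σ α ≠ 0)
    (h₁ : ∑ α ∈ S, α / goppaDenom σ α = 0)
    (h₂ : ∑ α ∈ S, τ α / goppaDenom σ α = 0)
    (h₃ : ∑ α ∈ S, α * τ α / goppaDenom σ α = 0) :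
    ∑ α ∈ S, (goppaDenom σ α)⁻¹ = 0 := by
  have h_sq : ∑ α ∈ S, α ^ 2 / goppaDenom σ α ^ 2 = 0 := sum_sq_div_sq_eq_zero h₁
  have h_map : ∑ α ∈ S, σ α / goppaDenom σ α ^ 2 = 0 := by
    simpa only [hτ] using sum_sq_div_sq_eq_zero h₂
  have h_sq_mul_map : ∑ α ∈ S, α ^ 2 * σ α / goppaDenom σ α ^ 2 = 0 := by
    simpa only [mul_pow, hτ] using sum_sq_div_sq_eq_zero h₃
  exact sum_inv_goppaDenom_eq_zero hσ hD
    (sum_mul_map_div_goppaDenom_sq_eq_zero hD h₁ h_sq h_sq_mul_map) h_map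

end Involution

theorem stmt_6_general [CharP K 2] {l : ℕ} (hl : 1 ≤ l) {t : ℕ} (ht : t = 2 ^ l)
    (hfix : ∀ α ∈ S, α ^ t ^ 2 = α)
    (hS : ∀ α ∈ S, α ≠ 0 ∧ α ^ t + α ^ (t - 1) + 1 ≠ 0)
    (hcw : ∀ j ∈ ({0, t / 2 - 1, t / 2} : Set ℕ),
      ∑ α ∈ S, α ^ j * (α ^ t + α ^ (t - 1) + 1)⁻¹ = 0) :
    ∑ α ∈ S, (α * (α ^ t + α ^ (t - 1) + 1))⁻¹ = 0 := by
  have t_eq : t / 2 * 2 = t :=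
    Nat.div_mul_cancel (ht ▸ dvd_pow_self 2 (Nat.one_le_iff_ne_zero.mp hl))
  have t_pos : 0 < t := ht ▸ l.two_pow_pos
  set σ := iterateFrobenius K 2 l
  have hσ (α : K) : σ α = α ^ t := by rw [ht]; exact iterateFrobenius_def ..
  have hD (α : K) : α * (α ^ t + α ^ (t - 1) + 1) = goppaDenom σ α := by
    rw [ht]; exact (goppaDenom_iterateFrobenius 2 l α).symm
  have check : ∀ j ∈ ({0, t / 2 - 1, t / 2} : Set ℕ),
      ∑ α ∈ S, α ^ (j + 1) / goppaDenom σ α = 0 := fun j hj => by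
    simpa only [sum_pow_mul_inv_eq_sum_pow_succ_div fun α hα => (hS α hα).1, hD] using hcw j hj
  simp only [hD]
  refine sum_inv_goppaDenom_eq_zero_of_sqrt (τ := fun α => α ^ (t / 2)) ?_ ?_ ?_ ?_ ?_ ?_
  · exact fun α => by rw [← pow_mul, t_eq, hσ]
  · exact fun α hα => by rw [hσ, hσ, ← pow_mul, ← sq, hfix α hα]
  · exact fun α hα => hD α ▸ mul_ne_zero (hS α hα).1 (hS α hα).2
  · simpa only [zero_add, pow_one] using check 0 (by simp)
  · have exponent : t / 2 - 1 + 1 = t / 2 := by omega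
    simpa only [exponent] using check (t / 2 - 1) (by simp)
  · simpa only [pow_succ'] using check (t / 2) (by simp)

end ParityChecks

theorem galoisField_pow_card (p : ℕ) [Fact p.Prime] {n : ℕ} (hn : n ≠ 0) (α : GaloisField p n) :
    α ^ p ^ n = α := by
  have := Fintype.ofFinite (GaloisField p n)
  rw [← GaloisField.card p n hn, Nat.card_eq_fintype_card, FiniteField.pow_card]

/-- Paper's Lemma 5: over `F = GF(2^(2l))`, `t = 2^l`,
`L₄ \ {0} = {α : α ≠ 0 ∧ α^t + α^(t-1) + 1 ≠ 0}`, every codeword `S` of the binary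
Goppa code `Γ(L₄ \ {0}, X^t + X^(t-1) + 1)` also satisfies the extra parity check
`∑_{α ∈ S} (α (α^t + α^(t-1) + 1))⁻¹ = 0`. -/
theorem stmt_6 (l : ℕ) (hl : 1 ≤ l) (t : ℕ) (ht : t = 2 ^ l)
    (S : Finset (GaloisField 2 (2 * l)))
    (hS : ∀ α ∈ S, α ≠ 0 ∧ α ^ t + α ^ (t - 1) + 1 ≠ 0)
    (hcw : ∀ j < t, ∑ α ∈ S, α ^ j * (α ^ t + α ^ (t - 1) + 1)⁻¹ = 0) :
    ∑ α ∈ S, (α * (α ^ t + α ^ (t - 1) + 1))⁻¹ = 0 := by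
  have hfix (α : GaloisField 2 (2 * l)) : α ^ t ^ 2 = α := by
    rw [ht, ← pow_mul, mul_comm l 2, galoisField_pow_card 2 (by omega)]
  have : 2 ≤ t := ht ▸ Nat.le_self_pow (by omega) 2
  exact stmt_6_general hl ht (fun α _ => hfix α) hS fun j hj => hcw j (by
    rcases hj with rfl | rfl | rfl <;> omega)
end

section
/- Let l ≥ 1, F = GF(2^{2l}), t = 2^l, L₃ = {α ∈ F : α^t + α + 1 ≠ 0}, and L₄ = {α ∈ F : α^t + α^{t−1} + 1 ≠ 0}. If S ⊆ L₃ is a codeword of the binary Goppa code Γ(L₃, X^t + X + 1) with 0 ∉ S (i.e., S belongs to the code shortened at the position 0), then the set of inverses {α⁻¹ : α ∈ S} is contained in L₄ and is a codeword of Γ(L₄, X^t + X^{t−1} + 1). (Paper's Lemma 6: Γ(L₃*, G₃) ⊂ Γ(L₄, G₄), via the substitution αᵢ ↦ αᵢ⁻¹.) -/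
open Finset
open scoped Classical

/-!
The polynomial `G₄ = X ^ t + X ^ (t - 1) + 1` is the reversal of `G₃ = X ^ t + X + 1`, so the
substitution `α ↦ α⁻¹` carries the `j`-th parity check of `Γ(L₄, G₄)` to the `(t - j)`-th power sum
of `Γ(L₃, G₃)`. For `0 < j < t` that is one of the parity checks of `Γ(L₃, G₃)`. The remaining
power sum, of exponent `t`, is the `t`-th power of the one of exponent `1`: `x ↦ x ^ t` is additive,
and it fixes `G₃(α) = Tr(α) + 1`, which lies in the subfield with `t` elements.
-/

section GoppaCode

open Polynomial

variable {K : Type*} [Field K]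

/-- The `j`-th power sum of the word `c`, with locations `L`, weighted by the inverse values of the
Goppa polynomial `G`. A word is given by its values at the locations; its values elsewhere are
irrelevant. A location at which `G` vanishes contributes `0`. -/
def goppaSyndrome (G : K[X]) (L : Finset K) (c : K → K) (j : ℕ) : K :=
  ∑ α ∈ L, c α * (α ^ j * (G.eval α)⁻¹)

/-- The word `c` satisfies the parity checks defining the Goppa code `Γ(L, G)`. The alphabet is not
part of the definition: for a code over a subfield, `c` takes its values there. -/
def IsGoppaCodeword (G : K[X]) (L : Finset K) (c : K → K) : Prop :=
  ∀ j < G.natDegree, goppaSyndrome G L c j = 0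

theorem eval_inv_reverse (G : K[X]) {α : K} (hα : α ≠ 0) :
    G.reverse.eval α⁻¹ = (α ^ G.natDegree)⁻¹ * G.eval α := by
  let := invertibleOfNonzero hα
  have h : G.reverse.eval α⁻¹ * α ^ G.natDegree = G.eval α := by
    simpa only [eval₂_id, invOf_eq_inv] using eval₂_reverse_mul_pow (RingHom.id K) α G
  rw [← h, mul_comm, mul_inv_cancel_right₀ (pow_ne_zero _ hα)]

theorem eval_reverse_ne_zero_of_mem_image_inv {G : K[X]} {L : Finset K} (h0 : 0 ∉ L)
    (hG : ∀ α ∈ L, G.eval α ≠ 0) : ∀ γ ∈ L.image (·⁻¹), G.reverse.eval γ ≠ 0 := by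
  refine forall_mem_image.mpr fun α hα ↦ ?_
  have hα0 : α ≠ 0 := ne_of_mem_of_not_mem hα h0
  rw [eval_inv_reverse G hα0]
  exact mul_ne_zero (inv_ne_zero (pow_ne_zero _ hα0)) (hG α hα)

theorem goppaSyndrome_reverse_image_inv (G : K[X]) {L : Finset K} (h0 : 0 ∉ L) (c : K → K) {j : ℕ}
    (hj : j ≤ G.natDegree) :
    goppaSyndrome G.reverse (L.image (·⁻¹)) (fun γ ↦ c γ⁻¹) j =
      goppaSyndrome G L c (G.natDegree - j) := by
  unfold goppaSyndrome
  rw [sum_image inv_injective.injOn]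
  refine sum_congr rfl fun α hα ↦ ?_
  have hα0 : α ≠ 0 := ne_of_mem_of_not_mem hα h0
  simp only [eval_inv_reverse G hα0, pow_sub₀ α hα0 hj, mul_inv, inv_inv, inv_pow]
  ring

theorem goppaSyndrome_pow_expChar_pow (p n : ℕ) [ExpChar K p] {G : K[X]} {L : Finset K} {c : K → K}
    (hc : ∀ α ∈ L, c α ^ p ^ n = c α) (hG : ∀ α ∈ L, G.eval α ^ p ^ n = G.eval α) (j : ℕ) :
    goppaSyndrome G L c j ^ p ^ n = goppaSyndrome G L c (j * p ^ n) := by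
  unfold goppaSyndrome
  rw [sum_pow_char_pow]
  refine sum_congr rfl fun α hα ↦ ?_
  rw [mul_pow, mul_pow, inv_pow, hc α hα, hG α hα, pow_mul]

theorem IsGoppaCodeword.reverse_image_inv {p n : ℕ} [ExpChar K p] (hpn : 1 < p ^ n) {G : K[X]}
    (hdvd : p ^ n ∣ G.natDegree) {L : Finset K} (h0 : 0 ∉ L)
    (hG : ∀ α ∈ L, G.eval α ^ p ^ n = G.eval α) {c : K → K} (hc : ∀ α ∈ L, c α ^ p ^ n = c α)
    (h : IsGoppaCodeword G L c) :
    IsGoppaCodeword G.reverse (L.image (·⁻¹)) (fun γ ↦ c γ⁻¹) := by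
  intro j hj
  have hj' : j < G.natDegree := hj.trans_le G.reverse_natDegree_le
  rw [goppaSyndrome_reverse_image_inv G h0 c hj'.le]
  rcases j.eq_zero_or_pos with rfl | hj_pos
  · obtain ⟨m, hm⟩ := exists_eq_mul_left_of_dvd hdvd
    have hm_lt : m < G.natDegree := by
      rw [hm]
      exact lt_mul_of_one_lt_right (Nat.pos_of_mul_pos_right (hm ▸ hj')) hpn
    rw [Nat.sub_zero, hm, ← goppaSyndrome_pow_expChar_pow p n hc hG, h m hm_lt,
      zero_pow (by lia)]
  · exact h _ (by lia)

end GoppaCode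

section Trinomial

open Polynomial

variable {R : Type*} [Semiring R] [Nontrivial R] {m n : ℕ}

theorem natDegree_X_pow_add_X_pow_add_one (hmn : m < n) :
    (X ^ n + X ^ m + 1 : R[X]).natDegree = n := by
  have hmn_le : m ≤ n := hmn.le
  have hn : n ≠ 0 := by lia
  compute_degree!
  simp [hmn.ne', hn]

theorem reverse_X_pow_add_X_pow_add_one (hmn : m < n) :
    (X ^ n + X ^ m + 1 : R[X]).reverse = X ^ n + X ^ (n - m) + 1 := by
  rw [reverse, natDegree_X_pow_add_X_pow_add_one hmn, reflect_add, reflect_add, reflect_monomial,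
    reflect_monomial, ← C_1, reflect_C, revAt_le le_rfl, revAt_le hmn.le, Nat.sub_self, pow_zero,
    C_1, one_mul]
  abel

end Trinomial

theorem pow_add_self_add_one_pow_eq_self {R : Type*} [CommSemiring R] {p n : ℕ} [ExpChar R p]
    {x : R} (hx : (x ^ p ^ n) ^ p ^ n = x) :
    (x ^ p ^ n + x + 1) ^ p ^ n = x ^ p ^ n + x + 1 := by
  rw [add_pow_expChar_pow, add_pow_expChar_pow, hx, one_pow, add_comm x]

theorem exists_expChar_eq_pow_of_natCard_eq_sq {K : Type*} [Field K] [Finite K] {q : ℕ}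
    (hq : Nat.card K = q ^ 2) : ∃ p n : ℕ, ExpChar K p ∧ q = p ^ n := by
  have := Fintype.ofFinite K
  obtain ⟨p, _, m, hp, hm⟩ := FiniteField.card' K
  have hdvd : q ∣ p ^ (m : ℕ) := by
    rw [← hm, ← Nat.card_eq_fintype_card, hq]
    exact dvd_pow_self q two_ne_zero
  obtain ⟨n, -, hn⟩ := (Nat.dvd_prime_pow hp).mp hdvd
  exact ⟨p, n, .prime hp, hn⟩

theorem pow_pow_eq_self_of_natCard_eq_sq {K : Type*} [Field K] [Finite K] {q : ℕ}
    (hq : Nat.card K = q ^ 2) (x : K) : (x ^ q) ^ q = x := by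
  have := Fintype.ofFinite K
  rw [← pow_mul, ← sq, ← hq, Nat.card_eq_fintype_card, FiniteField.pow_card]

open Polynomial in
theorem stmt_7_general {K : Type*} [Field K] [Finite K] {q : ℕ} (hq : Nat.card K = q ^ 2)
    {L : Finset K} (hL : ∀ α ∈ L, α ^ q + α + 1 ≠ 0) (h0 : 0 ∉ L)
    {c : K → K} (hc : ∀ α ∈ L, c α ^ q = c α)
    (hcw : ∀ j < q, ∑ α ∈ L, c α * (α ^ j * (α ^ q + α + 1)⁻¹) = 0) :
    (∀ γ ∈ L.image (·⁻¹), γ ^ q + γ ^ (q - 1) + 1 ≠ 0) ∧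
      (∀ j < q, ∑ γ ∈ L.image (·⁻¹), c γ⁻¹ * (γ ^ j * (γ ^ q + γ ^ (q - 1) + 1)⁻¹) = 0) := by
  have hq1 : 1 < q := (one_lt_sq_iff₀ q.zero_le).mp (hq ▸ Finite.one_lt_card)
  have hdeg : (X ^ q + X + 1 : K[X]).natDegree = q := by
    simpa only [pow_one] using natDegree_X_pow_add_X_pow_add_one hq1
  have hrev : (X ^ q + X + 1 : K[X]).reverse = X ^ q + X ^ (q - 1) + 1 := by
    simpa only [pow_one] using reverse_X_pow_add_X_pow_add_one hq1
  have hdeg_rev : (X ^ q + X ^ (q - 1) + 1 : K[X]).natDegree = q :=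
    natDegree_X_pow_add_X_pow_add_one (by lia)
  constructor
  · have hne := eval_reverse_ne_zero_of_mem_image_inv (G := (X ^ q + X + 1 : K[X])) h0
      (by simpa using hL)
    simpa [hrev] using hne
  · obtain ⟨p, n, _, rfl⟩ := exists_expChar_eq_pow_of_natCard_eq_sq hq
    have hfix (α : K) := pow_add_self_add_one_pow_eq_self (pow_pow_eq_self_of_natCard_eq_sq hq α)
    have hword : IsGoppaCodeword (X ^ p ^ n + X + 1) L c := by
      simpa [IsGoppaCodeword, goppaSyndrome, hdeg] using hcw
    have hword_inv := hword.reverse_image_inv hq1 hdeg.symm.dvd h0 (by simp [hfix]) hc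
    simpa [IsGoppaCodeword, goppaSyndrome, hrev, hdeg_rev] using hword_inv

/-- Paper's Lemma 6: over `F = GF(2^(2l))`, `t = 2^l`, if `S ⊆ L₃ = {α : α^t + α + 1 ≠ 0}`
is a codeword of `Γ(L₃, X^t + X + 1)` with `0 ∉ S`, then `{α⁻¹ : α ∈ S}` is contained in
`L₄ = {α : α^t + α^(t-1) + 1 ≠ 0}` and is a codeword of `Γ(L₄, X^t + X^(t-1) + 1)`. -/
theorem stmt_7 (l : ℕ) (hl : 1 ≤ l) (t : ℕ) (ht : t = 2 ^ l)
    (S : Finset (GaloisField 2 (2 * l)))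
    (hS : ∀ α ∈ S, α ^ t + α + 1 ≠ 0)
    (h0 : 0 ∉ S)
    (hcw : ∀ j < t, ∑ α ∈ S, α ^ j * (α ^ t + α + 1)⁻¹ = 0) :
    (∀ γ ∈ S.image (·⁻¹), γ ^ t + γ ^ (t - 1) + 1 ≠ 0) ∧
      (∀ j < t, ∑ γ ∈ S.image (·⁻¹), γ ^ j * (γ ^ t + γ ^ (t - 1) + 1)⁻¹ = 0) := by
  have hcard : Nat.card (GaloisField 2 (2 * l)) = t ^ 2 := by
    rw [GaloisField.card 2 (2 * l) (by lia), ht, ← pow_mul, mul_comm]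
  simpa only [one_mul] using
    stmt_7_general hcard hS h0 (c := fun _ ↦ 1) (by simp) (by simpa only [one_mul] using hcw)
end
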